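/- Let n ≥ 1, let V : ℝⁿ → ℝ be bounded, continuous and nonnegative, and let u : [0,∞) × ℝⁿ → ℝ be a smooth solution of ∂ₜ²u − Δₓu + V·u + ∂ₜu = 0 with u(0,·) = u₀ ∈ Cc^∞(ℝⁿ), ∂ₜu(0,·) = u₁ ∈ Cc^∞(ℝⁿ), such that for every T > 0 there is R > 0 with u(t,·) supported in the ball of radius R for all t ∈ [0,T]. Set I₀² := 3E(0) + ½‖u₀‖² + (u₁,u₀). Then for all t ≥ 0: (1+t)² E(t) ≤ 9E(0) + 6I₀² + (u₁,u₀) + ∫₀ᵗ ‖u(s,·)‖² ds, and ((1+t)/4)‖u(t,·)‖² ≤ 6E(0) + 5I₀² + (u₁,u₀) + ∫₀ᵗ ‖u(s,·)‖² ds. -/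

import Mathlib

open MeasureTheory

noncomputable section

/-- The Laplacian of `f : ℝⁿ → ℝ`, as the sum of second derivatives in the
coordinate directions. -/
def lap {n : ℕ} (f : EuclideanSpace ℝ (Fin n) → ℝ) (x : EuclideanSpace ℝ (Fin n)) : ℝ :=
  ∑ i : Fin n, iteratedFDeriv ℝ 2 f x ![EuclideanSpace.single i 1, EuclideanSpace.single i 1]

/-- The total energy `E(t) = ½∫ (|∂ₜu|² + |∇ₓu|² + V|u|²) dx`. -/
def energy {n : ℕ} (V : EuclideanSpace ℝ (Fin n) → ℝ)
    (u : ℝ → EuclideanSpace ℝ (Fin n) → ℝ) (t : ℝ) : ℝ :=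
  (1/2) * ∫ x, ((deriv (fun s => u s x) t) ^ 2 + ‖gradient (u t) x‖ ^ 2 + V x * (u t x) ^ 2)

/-!
Multiplying the equation by `∂ₜu` gives `dE/dt = -‖∂ₜu‖²`, and multiplying it by `u` gives
`d/dt (∂ₜu, u) = 2‖∂ₜu‖² - 2E - (∂ₜu, u)`. Hence `F := (∂ₜu, u) + ½‖u‖² + 2E` satisfies
`dF/dt = -2E`, and `(1+t)²E + (2+t)F - ½‖u‖²` has derivative `-(1+t)²‖∂ₜu‖² + ½‖u‖²`, which is at
most `½‖u‖²`. Expanding `‖∂ₜu + ½u‖² ≥ 0` and using `‖∂ₜu‖² ≤ 2E` gives `F ≥ ¼‖u‖²`, so after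
integration in time the weighted functional controls both `(1+t)²E` and `(1+t)‖u‖²`.
-/

open Set Filter Topology

section Parametric

variable {X F : Type*} [TopologicalSpace X] [T2Space X] [MeasurableSpace X]
  [OpensMeasurableSpace X] [NormedAddCommGroup F] [NormedSpace ℝ F]
  {μ : Measure X} [IsFiniteMeasureOnCompacts μ]

theorem hasDerivAt_integral_of_eq_zero_off_isCompact
    {f f' : ℝ → X → F} {K : Set X} {t : ℝ} (hK : IsCompact K)
    (hf : Continuous (Function.uncurry f)) (hf' : Continuous (Function.uncurry f'))
    (hff' : ∀ s x, HasDerivAt (f · x) (f' s x) s)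
    (hf_off : ∀ᶠ s in 𝓝 t, ∀ x ∉ K, f s x = 0) :
    HasDerivAt (fun s => ∫ x, f s x ∂μ) (∫ x, f' t x ∂μ) t := by
  have hf'_off : ∀ᶠ s in 𝓝 t, ∀ x ∉ K, f' s x = 0 := by
    filter_upwards [hf_off.eventually_nhds] with s hs x hx
    have hzero : (f · x) =ᶠ[𝓝 s] fun _ => 0 := hs.mono fun r hr => hr x hx
    exact (hff' s x).unique ((hasDerivAt_const s 0).congr_of_eventuallyEq hzero)
  obtain ⟨C, hC⟩ :=
    ((isCompact_Icc (a := t - 1) (b := t + 1)).prod hK).exists_bound_of_continuousOn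
      hf'.continuousOn
  have hbound : ∀ᶠ s in 𝓝 t, ∀ x, ‖f' s x‖ ≤ K.indicator (fun _ => C) x := by
    filter_upwards [hf'_off, Icc_mem_nhds (sub_one_lt t) (lt_add_one t)] with s hs_off hs x
    by_cases hx : x ∈ K
    · exact (hC (s, x) ⟨hs, hx⟩).trans_eq (indicator_of_mem hx fun _ => C).symm
    · simp only [hs_off x hx, norm_zero, indicator_of_notMem hx, le_refl]
  have hf_int : ∀ᶠ s in 𝓝 t, Integrable (f s) μ := hf_off.mono fun s hs =>
    Continuous.integrable_of_hasCompactSupport (by fun_prop) (.intro hK hs)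
  have hf'_int : Integrable (f' t) μ :=
    Continuous.integrable_of_hasCompactSupport (by fun_prop) (.intro hK hf'_off.self_of_nhds)
  exact (hasDerivAt_integral_of_dominated_loc_of_deriv_le hbound
    (hf_int.mono fun _ hs => hs.aestronglyMeasurable) hf_int.self_of_nhds
    hf'_int.aestronglyMeasurable
    (ae_of_all _ fun x s hs => hs x)
    ((integrable_indicator_iff hK.measurableSet).2 (integrableOn_const hK.measure_lt_top.ne))
    (ae_of_all _ fun x s _ => hff' s x)).2

end Parametric

section Slices

variable {S F : Type*} [NormedAddCommGroup S] [NormedSpace ℝ S]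
  [NormedAddCommGroup F] [NormedSpace ℝ F] {u : ℝ → S → F}

/-- The time derivative `∂ₜu` of a function `u` of time and space. -/
def timeDeriv {S : Type*} (u : ℝ → S → F) (t : ℝ) (x : S) : F :=
  deriv (fun s => u s x) t

theorem hasDerivAt_timeDeriv (hu : ContDiff ℝ 1 (Function.uncurry u)) (t : ℝ) (x : S) :
    HasDerivAt (fun s => u s x) (timeDeriv u t x) t :=
  ((hu.comp₂ contDiff_id contDiff_const).differentiable one_ne_zero t).hasDerivAt

theorem contDiff_timeDeriv {n : WithTop ℕ∞} (hu : ContDiff ℝ (n + 1) (Function.uncurry u)) :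
    ContDiff ℝ n (Function.uncurry (timeDeriv u)) :=
  ContDiff.fderiv_apply (f := fun (p : ℝ × S) s => u s p.2)
    (hu.comp₂ contDiff_snd (contDiff_snd.comp contDiff_fst)) contDiff_fst contDiff_const le_rfl

theorem contDiff_slice {n : WithTop ℕ∞} (hu : ContDiff ℝ n (Function.uncurry u)) (t : ℝ) :
    ContDiff ℝ n (u t) :=
  hu.comp₂ contDiff_const contDiff_id

theorem timeDeriv_eq_fderiv_uncurry (hu : ContDiff ℝ 1 (Function.uncurry u)) (t : ℝ) (x : S) :
    timeDeriv u t x = fderiv ℝ (Function.uncurry u) (t, x) (1, 0) := by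
  have huncurry := (hu.differentiable one_ne_zero (t, x)).hasFDerivAt
  exact (huncurry.comp_hasDerivAt t ((hasDerivAt_id t).prodMk (hasDerivAt_const t x))).deriv

theorem fderiv_slice_eq_fderiv_uncurry (hu : ContDiff ℝ 1 (Function.uncurry u)) (t : ℝ) (x : S) :
    fderiv ℝ (u t) x =
      (fderiv ℝ (Function.uncurry u) (t, x)).comp (ContinuousLinearMap.inr ℝ ℝ S) :=
  ((hu.differentiable one_ne_zero (t, x)).hasFDerivAt.comp x
    (hasFDerivAt_prodMk_right t x)).fderiv

theorem hasDerivAt_fderiv_slice (hu : ContDiff ℝ 2 (Function.uncurry u)) (t : ℝ) (x : S) :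
    HasDerivAt (fun s => fderiv ℝ (u s) x) (fderiv ℝ (timeDeriv u t) x) t := by
  have hu₁ : ContDiff ℝ 1 (Function.uncurry u) := hu.of_le one_le_two
  have hfderiv : HasFDerivAt (fderiv ℝ (Function.uncurry u))
      (fderiv ℝ (fderiv ℝ (Function.uncurry u)) (t, x)) (t, x) :=
    ((hu.fderiv_right (m := 1) le_rfl).differentiable one_ne_zero _).hasFDerivAt
  have hsymm : IsSymmSndFDerivAt ℝ (Function.uncurry u) (t, x) :=
    hu.contDiffAt.isSymmSndFDerivAt (by simp only [minSmoothness_of_isRCLikeNormedField, le_refl])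
  have htime := ((ContinuousLinearMap.compL ℝ S (ℝ × S) F).flip
    (ContinuousLinearMap.inr ℝ ℝ S)).hasFDerivAt.comp_hasDerivAt t
    (hfderiv.comp_hasDerivAt t ((hasDerivAt_id t).prodMk (hasDerivAt_const t x)))
  have hspace := (ContinuousLinearMap.apply ℝ F ((1 : ℝ), (0 : S))).hasFDerivAt.comp x
    (hfderiv.comp x (hasFDerivAt_prodMk_right t x))
  simp only [funext fun s => fderiv_slice_eq_fderiv_uncurry hu₁ s x,
    funext fun y => timeDeriv_eq_fderiv_uncurry hu₁ t y]
  refine htime.congr_deriv (Eq.trans ?_ hspace.fderiv.symm)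
  ext v
  exact hsymm (1, 0) (0, v)

end Slices

section GradientSlices

variable {S : Type*} [NormedAddCommGroup S] [InnerProductSpace ℝ S] [CompleteSpace S]
  {u : ℝ → S → ℝ}

theorem hasDerivAt_gradient_slice (hu : ContDiff ℝ 2 (Function.uncurry u)) (t : ℝ) (x : S) :
    HasDerivAt (fun s => gradient (u s) x) (gradient (timeDeriv u t) x) t :=
  (InnerProductSpace.toDual ℝ S).symm.toContinuousLinearEquiv.hasFDerivAt.comp_hasDerivAt t
    (hasDerivAt_fderiv_slice hu t x)

theorem continuous_gradient_slice (hu : ContDiff ℝ 1 (Function.uncurry u)) :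
    Continuous fun p : ℝ × S => gradient (u p.1) p.2 :=
  (InnerProductSpace.toDual ℝ S).symm.continuous.comp
    (ContDiff.fderiv (f := fun (p : ℝ × S) => u p.1)
      (hu.comp₂ (contDiff_fst.comp contDiff_fst) contDiff_snd) contDiff_snd
      (n := 0) (by simp only [zero_add, le_refl])).continuous

end GradientSlices

/-- `f` is compactly supported in space, uniformly for times in any bounded interval `[0, T]`;
nothing is asked at negative times. For solutions of wave equations with compactly supported data
this is finite speed of propagation. -/
def HasCompactSlabSupport {S F : Type*} [TopologicalSpace S] [Zero F] (f : ℝ → S → F) : Prop :=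
  ∀ T, 0 < T → ∃ K, IsCompact K ∧ ∀ t ∈ Icc 0 T, ∀ x ∉ K, f t x = 0

namespace HasCompactSlabSupport

section Algebra

variable {S F G : Type*} [TopologicalSpace S] {f : ℝ → S → F} {g : ℝ → S → G}

theorem of_imp_eq_zero [Zero F] [Zero G] (hf : HasCompactSlabSupport f)
    (hfg : ∀ t x, f t x = 0 → g t x = 0) : HasCompactSlabSupport g := fun T hT =>
  let ⟨K, hK, hf_off⟩ := hf T hT
  ⟨K, hK, fun t ht x hx => hfg t x (hf_off t ht x hx)⟩

theorem add [AddZeroClass F] {g : ℝ → S → F} (hf : HasCompactSlabSupport f)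
    (hg : HasCompactSlabSupport g) : HasCompactSlabSupport fun t x => f t x + g t x := by
  intro T hT
  obtain ⟨K, hK, hf_off⟩ := hf T hT
  obtain ⟨L, hL, hg_off⟩ := hg T hT
  refine ⟨K ∪ L, hK.union hL, fun t ht x hx => ?_⟩
  simp only [hf_off t ht x fun h => hx (.inl h), hg_off t ht x fun h => hx (.inr h), add_zero]

theorem hasCompactSupport [R1Space S] [Zero F] (hf : HasCompactSlabSupport f) {t : ℝ}
    (ht : 0 ≤ t) : HasCompactSupport (f t) :=
  let ⟨_, hK, hf_off⟩ := hf (t + 1) (by linarith)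
  .intro hK (hf_off t ⟨ht, by linarith⟩)

theorem of_forall_norm_ge {S : Type*} [NormedAddCommGroup S] [ProperSpace S] [Zero F]
    {f : ℝ → S → F}
    (hf : ∀ T, 0 < T → ∃ R, ∀ t ∈ Icc 0 T, ∀ x, R ≤ ‖x‖ → f t x = 0) :
    HasCompactSlabSupport f := fun T hT =>
  let ⟨R, hR⟩ := hf T hT
  ⟨Metric.closedBall 0 R, isCompact_closedBall 0 R, fun t ht x hx =>
    hR t ht x (le_of_lt (by simpa only [mem_closedBall_zero_iff, not_le] using hx))⟩

end Algebra

section Derivatives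

theorem timeDeriv {S F : Type*} [TopologicalSpace S] [NormedAddCommGroup F] [NormedSpace ℝ F]
    {f : ℝ → S → F} (hf : HasCompactSlabSupport f)
    (hdiff : ∀ t x, DifferentiableAt ℝ (fun s => f s x) t) :
    HasCompactSlabSupport (timeDeriv f) := by
  intro T hT
  obtain ⟨K, hK, hf_off⟩ := hf (T + 1) (by linarith)
  refine ⟨K, hK, fun t ht x hx => ?_⟩
  -- At `t = 0` only the right derivative is controlled, and it suffices.
  have hzero : HasDerivWithinAt (fun s => f s x) 0 (Icc t (T + 1)) t :=
    (hasDerivWithinAt_const t _ (0 : F)).congr_of_mem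
      (fun s hs => hf_off s ⟨ht.1.trans hs.1, hs.2⟩ x hx) ⟨le_rfl, by linarith [ht.2]⟩
  exact (uniqueDiffOn_Icc (by linarith [ht.2]) t ⟨le_rfl, by linarith [ht.2]⟩).eq_deriv _
    (hdiff t x).hasDerivAt.hasDerivWithinAt hzero

theorem gradient {S : Type*} [NormedAddCommGroup S] [InnerProductSpace ℝ S] [CompleteSpace S]
    {f : ℝ → S → ℝ} (hf : HasCompactSlabSupport f) :
    HasCompactSlabSupport fun t => gradient (f t) := by
  intro T hT
  obtain ⟨K, hK, hf_off⟩ := hf T hT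
  refine ⟨K, hK, fun t ht x hx => ?_⟩
  have hzero : f t =ᶠ[𝓝 x] fun _ => 0 :=
    (hK.isClosed.isOpen_compl.eventually_mem hx).mono fun y hy => hf_off t ht y hy
  exact hzero.gradient_eq.trans (gradient_fun_const x 0)

end Derivatives

section Integral

variable {S F : Type*} [TopologicalSpace S] [MeasurableSpace S] [OpensMeasurableSpace S]
  [NormedAddCommGroup F] {μ : Measure S} [IsFiniteMeasureOnCompacts μ]
  {f f' : ℝ → S → F}

theorem integrable [R1Space S] (hf : HasCompactSlabSupport f)
    (hcont : Continuous (Function.uncurry f)) {t : ℝ} (ht : 0 ≤ t) : Integrable (f t) μ :=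
  Continuous.integrable_of_hasCompactSupport (by fun_prop) (hf.hasCompactSupport ht)

variable [NormedSpace ℝ F]

theorem continuousOn_integral (hf : HasCompactSlabSupport f)
    (hcont : Continuous (Function.uncurry f)) :
    ContinuousOn (fun t => ∫ x, f t x ∂μ) (Ici 0) := by
  intro t ht
  obtain ⟨K, hK, hf_off⟩ := hf (t + 1) (by linarith [mem_Ici.1 ht])
  have hIcc : ContinuousOn (fun s => ∫ x, f s x ∂μ) (Icc 0 (t + 1)) :=
    continuousOn_integral_of_compact_support hK hcont.continuousOn fun s x hs hx => hf_off s hs x hx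
  have hIcc_mem : Icc 0 (t + 1) ∈ 𝓝[Ici 0] t :=
    inter_mem self_mem_nhdsWithin (mem_nhdsWithin_of_mem_nhds (Iic_mem_nhds (lt_add_one t)))
  exact (hIcc t ⟨ht, by linarith⟩).mono_of_mem_nhdsWithin hIcc_mem

theorem hasDerivAt_integral [T2Space S] (hf : HasCompactSlabSupport f)
    (hcont : Continuous (Function.uncurry f)) (hcont' : Continuous (Function.uncurry f'))
    (hff' : ∀ t x, HasDerivAt (f · x) (f' t x) t) {t : ℝ} (ht : 0 < t) :
    HasDerivAt (fun s => ∫ x, f s x ∂μ) (∫ x, f' t x ∂μ) t := by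
  obtain ⟨K, hK, hf_off⟩ := hf (t + 1) (by linarith)
  exact hasDerivAt_integral_of_eq_zero_off_isCompact hK hcont hcont' hff'
    (eventually_of_mem (Icc_mem_nhds ht (lt_add_one t)) hf_off)

end Integral

end HasCompactSlabSupport

section Green

section DirectionalDerivative

variable {S F : Type*} [NormedAddCommGroup S] [NormedSpace ℝ S] [NormedAddCommGroup F]
  [NormedSpace ℝ F] {h : S → F}

theorem contDiff_fderiv_apply {n : WithTop ℕ∞} (hh : ContDiff ℝ (n + 1) h) (v : S) :
    ContDiff ℝ n fun x => fderiv ℝ h x v :=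
  (hh.fderiv_right le_rfl).clm_apply contDiff_const

variable [MeasurableSpace S] [BorelSpace S] {μ : Measure S}

theorem integrable_fderiv_apply [IsFiniteMeasureOnCompacts μ] (hh : ContDiff ℝ 1 h)
    (hh_supp : HasCompactSupport h) (v : S) : Integrable (fun x => fderiv ℝ h x v) μ :=
  ((hh.continuous_fderiv one_ne_zero).clm_apply continuous_const).integrable_of_hasCompactSupport
    (hh_supp.fderiv_apply ℝ v)

theorem integral_fderiv_apply_eq_zero [FiniteDimensional ℝ S] [μ.IsAddHaarMeasure]
    (hh : ContDiff ℝ 1 h) (hh_supp : HasCompactSupport h) (v : S) :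
    ∫ x, fderiv ℝ h x v ∂μ = 0 := by
  have hparts := integral_smul_fderiv_eq_neg_fderiv_smul_of_integrable (𝕜 := ℝ) (μ := μ)
    (f := fun _ => (1 : ℝ)) (g := h) (v := v) (by simp)
    (by simpa using integrable_fderiv_apply hh hh_supp v)
    (by simpa using hh.continuous.integrable_of_hasCompactSupport hh_supp)
    (fun x _ => differentiableAt_const 1) (fun x _ => hh.differentiable one_ne_zero x)
  simpa using hparts

end DirectionalDerivative

variable {n : ℕ} {f g : EuclideanSpace ℝ (Fin n) → ℝ}

theorem inner_gradient_eq_sum (f g : EuclideanSpace ℝ (Fin n) → ℝ)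
    (x : EuclideanSpace ℝ (Fin n)) :
    inner ℝ (gradient f x) (gradient g x) =
      ∑ i, fderiv ℝ f x (EuclideanSpace.single i 1) * fderiv ℝ g x (EuclideanSpace.single i 1) := by
  rw [← (EuclideanSpace.basisFun (Fin n) ℝ).sum_inner_mul_inner]
  refine Finset.sum_congr rfl fun i _ => ?_
  rw [real_inner_comm (gradient g x)]
  simp only [EuclideanSpace.basisFun_apply, gradient, InnerProductSpace.toDual_symm_apply]

theorem lap_eq_sum_fderiv_fderiv (hg : ContDiff ℝ 2 g) (x : EuclideanSpace ℝ (Fin n)) :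
    lap g x = ∑ i, fderiv ℝ (fun y => fderiv ℝ g y (EuclideanSpace.single i 1)) x
      (EuclideanSpace.single i 1) := by
  have hdiff : DifferentiableAt ℝ (fderiv ℝ g) x :=
    (hg.fderiv_right (m := 1) le_rfl).differentiable one_ne_zero x
  refine Finset.sum_congr rfl fun i _ => ?_
  rw [iteratedFDeriv_two_apply, fderiv_clm_apply hdiff (differentiableAt_const _)]
  simp

theorem mul_lap_add_inner_gradient_eq_divergence (hf : ContDiff ℝ 1 f) (hg : ContDiff ℝ 2 g)
    (x : EuclideanSpace ℝ (Fin n)) :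
    f x * lap g x + inner ℝ (gradient f x) (gradient g x) =
      ∑ i, fderiv ℝ (fun y => f y * fderiv ℝ g y (EuclideanSpace.single i 1)) x
        (EuclideanSpace.single i 1) := by
  have hf_diff : DifferentiableAt ℝ f x := hf.differentiable one_ne_zero x
  have hDg_diff (v) : DifferentiableAt ℝ (fun y => fderiv ℝ g y v) x :=
    (contDiff_fderiv_apply hg v).differentiable one_ne_zero x
  rw [lap_eq_sum_fderiv_fderiv hg, inner_gradient_eq_sum, Finset.mul_sum, ← Finset.sum_add_distrib]
  refine Finset.sum_congr rfl fun i _ => ?_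
  rw [fderiv_fun_mul hf_diff (hDg_diff _)]
  simp only [_root_.add_apply, _root_.smul_apply, smul_eq_mul, mul_comm]

theorem integrable_mul_lap_add_inner_gradient (hf : ContDiff ℝ 1 f)
    (hf_supp : HasCompactSupport f) (hg : ContDiff ℝ 2 g) :
    Integrable fun x => f x * lap g x + inner ℝ (gradient f x) (gradient g x) := by
  simp only [mul_lap_add_inner_gradient_eq_divergence hf hg]
  exact integrable_finsetSum _ fun i _ =>
    integrable_fderiv_apply (hf.mul (contDiff_fderiv_apply hg _)) hf_supp.mul_right _

theorem integral_mul_lap_add_inner_gradient (hf : ContDiff ℝ 1 f)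
    (hf_supp : HasCompactSupport f) (hg : ContDiff ℝ 2 g) :
    ∫ x, (f x * lap g x + inner ℝ (gradient f x) (gradient g x)) = 0 := by
  simp only [mul_lap_add_inner_gradient_eq_divergence hf hg]
  rw [integral_finsetSum _ fun i _ =>
    integrable_fderiv_apply (hf.mul (contDiff_fderiv_apply hg _)) hf_supp.mul_right _]
  exact Finset.sum_eq_zero fun i _ =>
    integral_fderiv_apply_eq_zero (hf.mul (contDiff_fderiv_apply hg _)) hf_supp.mul_right _

end Green

section DampedWave

variable {n : ℕ} {V : EuclideanSpace ℝ (Fin n) → ℝ} {u : ℝ → EuclideanSpace ℝ (Fin n) → ℝ} {t : ℝ}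

/-- `u` is a classical solution of `∂ₜ²u - Δu + Vu + ∂ₜu = 0` on `[0, ∞) × ℝⁿ`, compactly supported
in space locally uniformly in time. Regularity is asked of an extension of `u` to all of
`ℝ × ℝⁿ`. -/
structure IsDampedWave (V : EuclideanSpace ℝ (Fin n) → ℝ)
    (u : ℝ → EuclideanSpace ℝ (Fin n) → ℝ) : Prop where
  contDiff : ContDiff ℝ 2 (Function.uncurry u)
  equation : ∀ t, 0 ≤ t → ∀ x,
    timeDeriv (timeDeriv u) t x - lap (u t) x + V x * u t x + timeDeriv u t x = 0
  support : HasCompactSlabSupport u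

/-- The squared norm `‖u(t,·)‖²`. -/
def normSq (u : ℝ → EuclideanSpace ℝ (Fin n) → ℝ) (t : ℝ) : ℝ :=
  ∫ x, u t x ^ 2

/-- The inner product `(∂ₜu(t,·), u(t,·))`, which is half the time derivative of `normSq u`. -/
def innerTimeDeriv (u : ℝ → EuclideanSpace ℝ (Fin n) → ℝ) (t : ℝ) : ℝ :=
  ∫ x, timeDeriv u t x * u t x

/-- The integrand `|∂ₜu|² + |∇u|² + V|u|²` of `2 * energy V u`. -/
def energyDensity (V : EuclideanSpace ℝ (Fin n) → ℝ) (u : ℝ → EuclideanSpace ℝ (Fin n) → ℝ)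
    (t : ℝ) (x : EuclideanSpace ℝ (Fin n)) : ℝ :=
  timeDeriv u t x ^ 2 + ‖gradient (u t) x‖ ^ 2 + V x * u t x ^ 2

/-- The Lyapunov functional `(∂ₜu, u) + ½‖u‖² + 2E`, whose derivative along a damped wave is
`-2E`. -/
def modifiedEnergy (V : EuclideanSpace ℝ (Fin n) → ℝ) (u : ℝ → EuclideanSpace ℝ (Fin n) → ℝ)
    (t : ℝ) : ℝ :=
  innerTimeDeriv u t + normSq u t / 2 + 2 * energy V u t

/-- The functional `(1+t)²E + (2+t)F - ½‖u‖²` with `F` the modified energy. The weights make all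
terms of its derivative other than `-(1+t)²‖∂ₜu‖² + ½‖u‖²` cancel. -/
def weightedEnergy (V : EuclideanSpace ℝ (Fin n) → ℝ) (u : ℝ → EuclideanSpace ℝ (Fin n) → ℝ)
    (t : ℝ) : ℝ :=
  (1 + t) ^ 2 * energy V u t + (2 + t) * modifiedEnergy V u t - normSq u t / 2

theorem normSq_nonneg (u : ℝ → EuclideanSpace ℝ (Fin n) → ℝ) (t : ℝ) : 0 ≤ normSq u t :=
  integral_nonneg fun _ => sq_nonneg _

theorem energy_eq_integral_energyDensity (V : EuclideanSpace ℝ (Fin n) → ℝ)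
    (u : ℝ → EuclideanSpace ℝ (Fin n) → ℝ) (t : ℝ) :
    energy V u t = (1 / 2) * ∫ x, energyDensity V u t x :=
  rfl

theorem sq_timeDeriv_le_energyDensity (hV : ∀ x, 0 ≤ V x) (t : ℝ)
    (x : EuclideanSpace ℝ (Fin n)) : timeDeriv u t x ^ 2 ≤ energyDensity V u t x := by
  have hpot : 0 ≤ V x * u t x ^ 2 := mul_nonneg (hV x) (sq_nonneg _)
  have hgrad : 0 ≤ ‖gradient (u t) x‖ ^ 2 := sq_nonneg _
  unfold energyDensity
  linarith

theorem energy_nonneg (hV : ∀ x, 0 ≤ V x) (u : ℝ → EuclideanSpace ℝ (Fin n) → ℝ) (t : ℝ) :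
    0 ≤ energy V u t :=
  mul_nonneg one_half_pos.le <| integral_nonneg fun x =>
    (sq_nonneg _).trans (sq_timeDeriv_le_energyDensity hV t x)

namespace IsDampedWave

theorem contDiff_one (hu : IsDampedWave V u) : ContDiff ℝ 1 (Function.uncurry u) :=
  hu.contDiff.of_le one_le_two

theorem contDiff_timeDeriv (hu : IsDampedWave V u) :
    ContDiff ℝ 1 (Function.uncurry (timeDeriv u)) :=
  _root_.contDiff_timeDeriv (n := 1) hu.contDiff

theorem continuous_timeDeriv_timeDeriv (hu : IsDampedWave V u) :
    Continuous (Function.uncurry (timeDeriv (timeDeriv u))) :=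
  (_root_.contDiff_timeDeriv (n := 0) hu.contDiff_timeDeriv).continuous

theorem support_timeDeriv (hu : IsDampedWave V u) : HasCompactSlabSupport (timeDeriv u) :=
  hu.support.timeDeriv fun t x => (hasDerivAt_timeDeriv hu.contDiff_one t x).differentiableAt

theorem support_sq (hu : IsDampedWave V u) : HasCompactSlabSupport fun t x => u t x ^ 2 :=
  hu.support.of_imp_eq_zero fun t x h => by simp only [h, zero_pow two_ne_zero]

theorem continuous_sq (hu : IsDampedWave V u) :
    Continuous (Function.uncurry fun t x => u t x ^ 2) :=
  hu.contDiff.continuous.pow 2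

theorem support_sq_timeDeriv (hu : IsDampedWave V u) :
    HasCompactSlabSupport fun t x => timeDeriv u t x ^ 2 :=
  hu.support_timeDeriv.of_imp_eq_zero fun t x h => by simp only [h, zero_pow two_ne_zero]

theorem continuous_sq_timeDeriv (hu : IsDampedWave V u) :
    Continuous (Function.uncurry fun t x => timeDeriv u t x ^ 2) :=
  hu.contDiff_timeDeriv.continuous.pow 2

theorem support_timeDeriv_mul (hu : IsDampedWave V u) :
    HasCompactSlabSupport fun t x => timeDeriv u t x * u t x :=
  hu.support.of_imp_eq_zero fun t x h => by simp only [h, mul_zero]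

theorem continuous_timeDeriv_mul (hu : IsDampedWave V u) :
    Continuous (Function.uncurry fun t x => timeDeriv u t x * u t x) :=
  hu.contDiff_timeDeriv.continuous.mul hu.contDiff.continuous

theorem support_energyDensity (hu : IsDampedWave V u) :
    HasCompactSlabSupport (energyDensity V u) :=
  (hu.support_sq_timeDeriv.add
    (hu.support.gradient.of_imp_eq_zero fun t x h => by
      simp only [h, norm_zero, zero_pow two_ne_zero])).add
    (hu.support_sq.of_imp_eq_zero fun t x h => by simp only [h, mul_zero])

theorem continuous_energyDensity (hu : IsDampedWave V u) (hV : Continuous V) :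
    Continuous (Function.uncurry (energyDensity V u)) :=
  (hu.continuous_sq_timeDeriv.add ((continuous_gradient_slice hu.contDiff_one).norm.pow 2)).add
    ((hV.comp continuous_snd).mul hu.continuous_sq)

theorem continuousOn_normSq (hu : IsDampedWave V u) : ContinuousOn (normSq u) (Ici 0) :=
  hu.support_sq.continuousOn_integral hu.continuous_sq

theorem continuousOn_innerTimeDeriv (hu : IsDampedWave V u) :
    ContinuousOn (innerTimeDeriv u) (Ici 0) :=
  hu.support_timeDeriv_mul.continuousOn_integral hu.continuous_timeDeriv_mul

theorem continuousOn_energy (hu : IsDampedWave V u) (hV : Continuous V) :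
    ContinuousOn (energy V u) (Ici 0) :=
  continuousOn_const.mul
    (hu.support_energyDensity.continuousOn_integral (hu.continuous_energyDensity hV))

theorem continuousOn_modifiedEnergy (hu : IsDampedWave V u) (hV : Continuous V) :
    ContinuousOn (modifiedEnergy V u) (Ici 0) :=
  (hu.continuousOn_innerTimeDeriv.add (hu.continuousOn_normSq.div_const 2)).add
    (continuousOn_const.mul (hu.continuousOn_energy hV))

theorem continuousOn_weightedEnergy (hu : IsDampedWave V u) (hV : Continuous V) :
    ContinuousOn (weightedEnergy V u) (Ici 0) :=
  (((by fun_prop : ContinuousOn (fun t : ℝ => (1 + t) ^ 2) (Ici 0)).mul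
    (hu.continuousOn_energy hV)).add
    ((by fun_prop : ContinuousOn (fun t : ℝ => 2 + t) (Ici 0)).mul
      (hu.continuousOn_modifiedEnergy hV))).sub (hu.continuousOn_normSq.div_const 2)

theorem hasDerivAt_normSq (hu : IsDampedWave V u) (ht : 0 < t) :
    HasDerivAt (normSq u) (2 * innerTimeDeriv u t) t := by
  have hderiv (s x) : HasDerivAt (fun r => u r x ^ 2) (2 * (timeDeriv u s x * u s x)) s :=
    ((hasDerivAt_timeDeriv hu.contDiff_one s x).pow 2).congr_deriv (by ring)
  have hcont : Continuous (Function.uncurry fun s x => 2 * (timeDeriv u s x * u s x)) :=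
    continuous_const.mul hu.continuous_timeDeriv_mul
  exact (hu.support_sq.hasDerivAt_integral hu.continuous_sq hcont hderiv ht).congr_deriv
    (integral_const_mul 2 _)

theorem integral_timeDeriv_timeDeriv_mul_add (hu : IsDampedWave V u) (hV : Continuous V)
    (ht : 0 ≤ t) :
    ∫ x, (timeDeriv (timeDeriv u) t x * u t x + timeDeriv u t x * timeDeriv u t x) =
      2 * normSq (timeDeriv u) t - 2 * energy V u t - innerTimeDeriv u t := by
  have hpde (x) : timeDeriv (timeDeriv u) t x * u t x + timeDeriv u t x * timeDeriv u t x =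
      (u t x * lap (u t) x + inner ℝ (gradient (u t) x) (gradient (u t) x))
        + (2 * timeDeriv u t x ^ 2 - energyDensity V u t x - timeDeriv u t x * u t x) := by
    rw [real_inner_self_eq_norm_sq]
    unfold energyDensity
    linear_combination u t x * hu.equation t ht x
  have hgreen_int := integrable_mul_lap_add_inner_gradient (contDiff_slice hu.contDiff_one t)
    (hu.support.hasCompactSupport ht) (contDiff_slice hu.contDiff t)
  have hgreen := integral_mul_lap_add_inner_gradient (contDiff_slice hu.contDiff_one t)
    (hu.support.hasCompactSupport ht) (contDiff_slice hu.contDiff t)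
  have hkin : Integrable fun x => 2 * timeDeriv u t x ^ 2 :=
    (hu.support_sq_timeDeriv.integrable hu.continuous_sq_timeDeriv ht).const_mul 2
  have hdensity : Integrable (energyDensity V u t) :=
    hu.support_energyDensity.integrable (hu.continuous_energyDensity hV) ht
  have hcross : Integrable fun x => timeDeriv u t x * u t x :=
    hu.support_timeDeriv_mul.integrable hu.continuous_timeDeriv_mul ht
  have hkin_sub : Integrable fun x => 2 * timeDeriv u t x ^ 2 - energyDensity V u t x :=
    hkin.sub hdensity
  have hrest : Integrable fun x =>
      2 * timeDeriv u t x ^ 2 - energyDensity V u t x - timeDeriv u t x * u t x :=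
    hkin_sub.sub hcross
  simp only [hpde]
  rw [integral_add hgreen_int hrest, hgreen, integral_sub hkin_sub hcross,
    integral_sub hkin hdensity, integral_const_mul, energy_eq_integral_energyDensity, normSq,
    innerTimeDeriv]
  ring

theorem hasDerivAt_innerTimeDeriv (hu : IsDampedWave V u) (hV : Continuous V) (ht : 0 < t) :
    HasDerivAt (innerTimeDeriv u)
      (2 * normSq (timeDeriv u) t - 2 * energy V u t - innerTimeDeriv u t) t := by
  have hderiv (s x) : HasDerivAt (fun r => timeDeriv u r x * u r x)
      (timeDeriv (timeDeriv u) s x * u s x + timeDeriv u s x * timeDeriv u s x) s :=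
    (hasDerivAt_timeDeriv hu.contDiff_timeDeriv s x).mul (hasDerivAt_timeDeriv hu.contDiff_one s x)
  have hcont : Continuous (Function.uncurry fun s x =>
      timeDeriv (timeDeriv u) s x * u s x + timeDeriv u s x * timeDeriv u s x) :=
    (hu.continuous_timeDeriv_timeDeriv.mul hu.contDiff.continuous).add
      (hu.contDiff_timeDeriv.continuous.mul hu.contDiff_timeDeriv.continuous)
  exact (hu.support_timeDeriv_mul.hasDerivAt_integral hu.continuous_timeDeriv_mul hcont hderiv
    ht).congr_deriv (hu.integral_timeDeriv_timeDeriv_mul_add hV ht.le)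

theorem hasDerivAt_energyDensity (hu : IsDampedWave V u) (t : ℝ) (x : EuclideanSpace ℝ (Fin n)) :
    HasDerivAt (fun s => energyDensity V u s x)
      (2 * (timeDeriv u t x * timeDeriv (timeDeriv u) t x
        + inner ℝ (gradient (timeDeriv u t) x) (gradient (u t) x)
        + V x * (timeDeriv u t x * u t x))) t := by
  have hkin := (hasDerivAt_timeDeriv hu.contDiff_timeDeriv t x).pow 2
  have hgrad := (hasDerivAt_gradient_slice hu.contDiff t x).norm_sq
  have hpot := ((hasDerivAt_timeDeriv hu.contDiff_one t x).pow 2).const_mul (V x)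
  refine ((hkin.add hgrad).add hpot).congr_deriv ?_
  rw [real_inner_comm]
  ring

theorem continuous_timeDeriv_energyDensity (hu : IsDampedWave V u) (hV : Continuous V) :
    Continuous (Function.uncurry fun t x => 2 * (timeDeriv u t x * timeDeriv (timeDeriv u) t x
        + inner ℝ (gradient (timeDeriv u t) x) (gradient (u t) x)
        + V x * (timeDeriv u t x * u t x))) :=
  continuous_const.mul <|
    ((hu.contDiff_timeDeriv.continuous.mul hu.continuous_timeDeriv_timeDeriv).add
      ((continuous_gradient_slice hu.contDiff_timeDeriv).inner
        (continuous_gradient_slice hu.contDiff_one))).add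
      ((hV.comp continuous_snd).mul hu.continuous_timeDeriv_mul)

theorem integral_timeDeriv_mul_equation (hu : IsDampedWave V u) (ht : 0 ≤ t) :
    ∫ x, (timeDeriv u t x * timeDeriv (timeDeriv u) t x
      + inner ℝ (gradient (timeDeriv u t) x) (gradient (u t) x)
      + V x * (timeDeriv u t x * u t x)) = -normSq (timeDeriv u) t := by
  have hpde (x) : timeDeriv u t x * timeDeriv (timeDeriv u) t x
      + inner ℝ (gradient (timeDeriv u t) x) (gradient (u t) x)
      + V x * (timeDeriv u t x * u t x) =
      (timeDeriv u t x * lap (u t) x + inner ℝ (gradient (timeDeriv u t) x) (gradient (u t) x))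
        - timeDeriv u t x ^ 2 := by
    linear_combination timeDeriv u t x * hu.equation t ht x
  have hgreen_int := integrable_mul_lap_add_inner_gradient (contDiff_slice hu.contDiff_timeDeriv t)
    (hu.support_timeDeriv.hasCompactSupport ht) (contDiff_slice hu.contDiff t)
  have hgreen := integral_mul_lap_add_inner_gradient (contDiff_slice hu.contDiff_timeDeriv t)
    (hu.support_timeDeriv.hasCompactSupport ht) (contDiff_slice hu.contDiff t)
  simp only [hpde]
  rw [integral_sub hgreen_int
    (hu.support_sq_timeDeriv.integrable hu.continuous_sq_timeDeriv ht), hgreen, zero_sub, normSq]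

theorem hasDerivAt_energy (hu : IsDampedWave V u) (hV : Continuous V) (ht : 0 < t) :
    HasDerivAt (energy V u) (-normSq (timeDeriv u) t) t := by
  refine ((hu.support_energyDensity.hasDerivAt_integral (hu.continuous_energyDensity hV)
    (hu.continuous_timeDeriv_energyDensity hV) hu.hasDerivAt_energyDensity ht).const_mul
    (1 / 2)).congr_deriv ?_
  rw [integral_const_mul, hu.integral_timeDeriv_mul_equation ht.le]
  ring

theorem hasDerivAt_modifiedEnergy (hu : IsDampedWave V u) (hV : Continuous V) (ht : 0 < t) :
    HasDerivAt (modifiedEnergy V u) (-2 * energy V u t) t :=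
  (((hu.hasDerivAt_innerTimeDeriv hV ht).add ((hu.hasDerivAt_normSq ht).div_const 2)).add
    ((hu.hasDerivAt_energy hV ht).const_mul 2)).congr_deriv (by ring)

theorem hasDerivAt_weightedEnergy (hu : IsDampedWave V u) (hV : Continuous V) (ht : 0 < t) :
    HasDerivAt (weightedEnergy V u)
      (-(1 + t) ^ 2 * normSq (timeDeriv u) t + normSq u t / 2) t := by
  have hsq : HasDerivAt (fun s : ℝ => (1 + s) ^ 2) (2 * (1 + t)) t :=
    (((hasDerivAt_id t).const_add 1).pow 2).congr_deriv (by simp)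
  have hlin : HasDerivAt (fun s : ℝ => 2 + s) 1 t := (hasDerivAt_id t).const_add 2
  refine (((hsq.mul (hu.hasDerivAt_energy hV ht)).add
    (hlin.mul (hu.hasDerivAt_modifiedEnergy hV ht))).sub
    ((hu.hasDerivAt_normSq ht).div_const 2)).congr_deriv ?_
  unfold modifiedEnergy
  ring

theorem modifiedEnergy_le (hu : IsDampedWave V u) (hV : Continuous V) (hV₀ : ∀ x, 0 ≤ V x)
    (ht : 0 ≤ t) : modifiedEnergy V u t ≤ modifiedEnergy V u 0 := by
  have hanti : AntitoneOn (modifiedEnergy V u) (Ici 0) := by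
    refine antitoneOn_of_hasDerivWithinAt_nonpos (f' := fun s => -2 * energy V u s) (convex_Ici 0)
      (hu.continuousOn_modifiedEnergy hV) (fun s hs => ?_) fun s _ => ?_
    · rw [interior_Ici] at hs
      exact (hu.hasDerivAt_modifiedEnergy hV hs).hasDerivWithinAt
    · linarith [energy_nonneg hV₀ u s]
  exact hanti self_mem_Ici ht ht

theorem weightedEnergy_le (hu : IsDampedWave V u) (hV : Continuous V) (ht : 0 ≤ t) :
    weightedEnergy V u t ≤ weightedEnergy V u 0 + (∫ s in 0..t, normSq u s) / 2 := by
  have hnormSq : ContinuousOn (fun s => normSq u s / 2) (Icc 0 t) :=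
    (hu.continuousOn_normSq.div_const 2).mono Icc_subset_Ici_self
  have hle := intervalIntegral.sub_le_integral_of_hasDeriv_right_of_le ht
    ((hu.continuousOn_weightedEnergy hV).mono Icc_subset_Ici_self)
    (fun s hs => (hu.hasDerivAt_weightedEnergy hV hs.1).hasDerivWithinAt)
    hnormSq.integrableOn_Icc fun s _ => by
      nlinarith [mul_nonneg (sq_nonneg (1 + s)) (normSq_nonneg (timeDeriv u) s)]
  rw [intervalIntegral.integral_div] at hle
  linarith

theorem normSq_timeDeriv_le_two_mul_energy (hu : IsDampedWave V u) (hV : Continuous V)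
    (hV₀ : ∀ x, 0 ≤ V x) (ht : 0 ≤ t) : normSq (timeDeriv u) t ≤ 2 * energy V u t := by
  have hle : normSq (timeDeriv u) t ≤ ∫ x, energyDensity V u t x :=
    integral_mono (hu.support_sq_timeDeriv.integrable hu.continuous_sq_timeDeriv ht)
      (hu.support_energyDensity.integrable (hu.continuous_energyDensity hV) ht)
      (sq_timeDeriv_le_energyDensity hV₀ t)
  linarith [energy_eq_integral_energyDensity V u t]

theorem normSq_timeDeriv_add_innerTimeDeriv_nonneg (hu : IsDampedWave V u) (ht : 0 ≤ t) :
    0 ≤ normSq (timeDeriv u) t + innerTimeDeriv u t + normSq u t / 4 := by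
  have hkin : Integrable fun x => timeDeriv u t x ^ 2 :=
    hu.support_sq_timeDeriv.integrable hu.continuous_sq_timeDeriv ht
  have hcross : Integrable fun x => timeDeriv u t x * u t x :=
    hu.support_timeDeriv_mul.integrable hu.continuous_timeDeriv_mul ht
  have hsq : Integrable fun x => u t x ^ 2 := hu.support_sq.integrable hu.continuous_sq ht
  have hkin_add : Integrable fun x => timeDeriv u t x ^ 2 + timeDeriv u t x * u t x :=
    hkin.add hcross
  calc 0 ≤ ∫ x, (timeDeriv u t x + u t x / 2) ^ 2 := integral_nonneg fun _ => sq_nonneg _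
    _ = ∫ x, (timeDeriv u t x ^ 2 + timeDeriv u t x * u t x + u t x ^ 2 / 4) := by
      congr with x
      ring
    _ = normSq (timeDeriv u) t + innerTimeDeriv u t + normSq u t / 4 := by
      rw [integral_add hkin_add (hsq.div_const 4), integral_add hkin hcross, integral_div]
      rfl

theorem normSq_div_four_le_modifiedEnergy (hu : IsDampedWave V u) (hV : Continuous V)
    (hV₀ : ∀ x, 0 ≤ V x) (ht : 0 ≤ t) : normSq u t / 4 ≤ modifiedEnergy V u t := by
  have hyoung := hu.normSq_timeDeriv_add_innerTimeDeriv_nonneg ht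
  have hkin := hu.normSq_timeDeriv_le_two_mul_energy hV hV₀ ht
  unfold modifiedEnergy
  linarith

theorem sq_mul_energy_le (hu : IsDampedWave V u) (hV : Continuous V) (hV₀ : ∀ x, 0 ≤ V x)
    (ht : 0 ≤ t) :
    (1 + t) ^ 2 * energy V u t ≤ 5 * energy V u 0 + 2 * innerTimeDeriv u 0 + normSq u 0 / 2
      + (∫ s in 0..t, normSq u s) / 2 := by
  have hweighted := hu.weightedEnergy_le hV ht
  have hmodified : (2 + t) * (normSq u t / 4) ≤ (2 + t) * modifiedEnergy V u t :=
    mul_le_mul_of_nonneg_left (hu.normSq_div_four_le_modifiedEnergy hV hV₀ ht) (by linarith)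
  have hnormSq : 0 ≤ t * normSq u t := mul_nonneg ht (normSq_nonneg u t)
  simp only [weightedEnergy, modifiedEnergy] at hweighted hmodified
  linarith

theorem mul_normSq_le (hu : IsDampedWave V u) (hV : Continuous V) (hV₀ : ∀ x, 0 ≤ V x)
    (ht : 0 ≤ t) :
    (1 + t) / 4 * normSq u t ≤ 7 * energy V u 0 + 3 * innerTimeDeriv u 0 + normSq u 0
      + (∫ s in 0..t, normSq u s) / 2 := by
  have hweighted := hu.weightedEnergy_le hV ht
  have hnormSq_le := hu.normSq_div_four_le_modifiedEnergy hV hV₀ ht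
  have hmodified : (2 + t) * (normSq u t / 4) ≤ (2 + t) * modifiedEnergy V u t :=
    mul_le_mul_of_nonneg_left hnormSq_le (by linarith)
  have hdecr := hu.modifiedEnergy_le hV hV₀ ht
  have henergy : 0 ≤ (1 + t) ^ 2 * energy V u t :=
    mul_nonneg (sq_nonneg _) (energy_nonneg hV₀ u t)
  simp only [weightedEnergy, modifiedEnergy] at hweighted hmodified hdecr hnormSq_le
  linarith

end IsDampedWave

end DampedWave

theorem damped_wave_key_decay_lemma_general {n : ℕ} {V : EuclideanSpace ℝ (Fin n) → ℝ}
    {u : ℝ → EuclideanSpace ℝ (Fin n) → ℝ} {u₀ u₁ : EuclideanSpace ℝ (Fin n) → ℝ}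
    (hu : IsDampedWave V u) (hVcont : Continuous V) (hVnonneg : ∀ x, 0 ≤ V x)
    (hinit0 : ∀ x, u 0 x = u₀ x) (hinit1 : ∀ x, deriv (fun s => u s x) 0 = u₁ x)
    {t : ℝ} (ht : 0 ≤ t) :
    ((1 + t) ^ 2 * energy V u t ≤
      9 * energy V u 0
        + 6 * (3 * energy V u 0 + (1 / 2) * (∫ x, (u₀ x) ^ 2) + ∫ x, u₁ x * u₀ x)
        + (∫ x, u₁ x * u₀ x) + ∫ s in (0 : ℝ)..t, ∫ x, (u s x) ^ 2) ∧
    (((1 + t) / 4) * (∫ x, (u t x) ^ 2) ≤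
      6 * energy V u 0
        + 5 * (3 * energy V u 0 + (1 / 2) * (∫ x, (u₀ x) ^ 2) + ∫ x, u₁ x * u₀ x)
        + (∫ x, u₁ x * u₀ x) + ∫ s in (0 : ℝ)..t, ∫ x, (u s x) ^ 2) := by
  simp only [← hinit0, ← hinit1]
  change (1 + t) ^ 2 * energy V u t ≤ 9 * energy V u 0
      + 6 * (3 * energy V u 0 + (1 / 2) * normSq u 0 + innerTimeDeriv u 0) + innerTimeDeriv u 0
      + ∫ s in 0..t, normSq u s ∧
    (1 + t) / 4 * normSq u t ≤ 6 * energy V u 0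
      + 5 * (3 * energy V u 0 + (1 / 2) * normSq u 0 + innerTimeDeriv u 0) + innerTimeDeriv u 0
      + ∫ s in 0..t, normSq u s
  have henergy : 0 ≤ energy V u 0 := energy_nonneg hVnonneg u 0
  have hnormSq : 0 ≤ normSq u 0 := normSq_nonneg u 0
  have hmodified := hu.normSq_div_four_le_modifiedEnergy hVcont hVnonneg le_rfl
  have hintegral : 0 ≤ ∫ s in 0..t, normSq u s :=
    intervalIntegral.integral_nonneg ht fun s _ => normSq_nonneg u s
  unfold modifiedEnergy at hmodified
  constructor
  · linarith [hu.sq_mul_energy_le hVcont hVnonneg ht]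
  · linarith [hu.mul_normSq_le hVcont hVnonneg ht]

theorem damped_wave_key_decay_lemma (n : ℕ) (hn : 1 ≤ n)
    (V : EuclideanSpace ℝ (Fin n) → ℝ)
    (hVcont : Continuous V) (hVbdd : ∃ M, ∀ x, |V x| ≤ M)
    (hVnonneg : ∀ x, 0 ≤ V x)
    (u : ℝ → EuclideanSpace ℝ (Fin n) → ℝ)
    (u₀ u₁ : EuclideanSpace ℝ (Fin n) → ℝ)
    (hu : ContDiff ℝ (⊤ : ℕ∞) (fun p : ℝ × EuclideanSpace ℝ (Fin n) => u p.1 p.2))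
    (hu₀smooth : ContDiff ℝ (⊤ : ℕ∞) u₀) (hu₀supp : HasCompactSupport u₀)
    (hu₁smooth : ContDiff ℝ (⊤ : ℕ∞) u₁) (hu₁supp : HasCompactSupport u₁)
    (hPDE : ∀ t, 0 ≤ t → ∀ x,
      deriv (fun s => deriv (fun r => u r x) s) t - lap (u t) x + V x * u t x
        + deriv (fun s => u s x) t = 0)
    (hinit0 : ∀ x, u 0 x = u₀ x)
    (hinit1 : ∀ x, deriv (fun s => u s x) 0 = u₁ x)
    (hsupp : ∀ T, 0 < T → ∃ R, 0 < R ∧ ∀ t ∈ Set.Icc (0:ℝ) T, ∀ x,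
      R ≤ ‖x‖ → u t x = 0)
    :
    ∀ t, 0 ≤ t →
      ((1 + t) ^ 2 * energy V u t ≤
        9 * energy V u 0
          + 6 * (3 * energy V u 0 + (1/2) * (∫ x, (u₀ x) ^ 2) + ∫ x, u₁ x * u₀ x)
          + (∫ x, u₁ x * u₀ x) + ∫ s in (0:ℝ)..t, ∫ x, (u s x) ^ 2) ∧
      (((1 + t) / 4) * (∫ x, (u t x) ^ 2) ≤
        6 * energy V u 0
          + 5 * (3 * energy V u 0 + (1/2) * (∫ x, (u₀ x) ^ 2) + ∫ x, u₁ x * u₀ x)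
          + (∫ x, u₁ x * u₀ x) + ∫ s in (0:ℝ)..t, ∫ x, (u s x) ^ 2) :=
  fun _ ht => damped_wave_key_decay_lemma_general
    ⟨hu.of_le (WithTop.coe_le_coe.2 le_top), hPDE,
      .of_forall_norm_ge fun T hT => (hsupp T hT).imp fun _ hR => hR.2⟩
    hVcont hVnonneg hinit0 hinit1 ht
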